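/- arXiv:1705.00327 — 2 statements merged into one kernel-verified Lean document; each statement's English description precedes it below -/
import Mathlib

section
/- For every weighted undirected graph G = (V, E, w) with positive edge weights on n vertices, every integer k ≥ 1, and every real ε > 0, there exists a (β, ε)-hopset H for G of size at most C·n^{1 + 1/(2^{k+1} − 1)}, where C is an absolute constant (independent of n, k, ε), and where β = 2(r+1)^k with r = ⌈4k / ln(1+ε)⌉. -/
open scoped ENNReal
open Classical

/-- Hop-bounded distance: minimum total weight of a walk with at most `β` edges. -/
noncomputable def hopDist {V : Type*} (w : V → V → ℝ≥0∞) : ℕ → V → V → ℝ≥0∞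
  | 0, u, v => if u = v then 0 else ⊤
  | β + 1, u, v => hopDist w β u v ⊓ ⨅ x, w u x + hopDist w β x v

/-- Shortest-path distance (infimum over all hop bounds). -/
noncomputable def gdist {V : Type*} (w : V → V → ℝ≥0∞) (u v : V) : ℝ≥0∞ :=
  ⨅ β, hopDist w β u v

/-- The graph `G ∪ H`: add each edge of `H` with weight equal to the `G`-distance
between its endpoints. -/
noncomputable def addShortcuts {V : Type*} (w : V → V → ℝ≥0∞) (H : Set (V × V)) :
    V → V → ℝ≥0∞ :=
  fun u v => w u v ⊓ (if (u, v) ∈ H ∨ (v, u) ∈ H then gdist w u v else ⊤)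

/-- `H` is a `(β, ε)`-hopset for the graph with weight function `w`. -/
def IsHopset {V : Type*} (w : V → V → ℝ≥0∞) (H : Set (V × V)) (β : ℕ) (ε : ℝ) : Prop :=
  ∀ u v : V,
    gdist w u v ≤ hopDist (addShortcuts w H) β u v ∧
    hopDist (addShortcuts w H) β u v ≤ ENNReal.ofReal (1 + ε) * gdist w u v

/-! ### Basic facts on hop-bounded distances -/

section Basics

variable {V : Type*}

theorem hopDist_mono_succ (w : V → V → ℝ≥0∞) (b : ℕ) (u v : V) :
    hopDist w (b + 1) u v ≤ hopDist w b u v := by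
  rw [hopDist]; exact inf_le_left

theorem hopDist_anti (w : V → V → ℝ≥0∞) (u v : V) : Antitone (fun b => hopDist w b u v) :=
  antitone_nat_of_succ_le (fun b => hopDist_mono_succ w b u v)

theorem hopDist_self (w : V → V → ℝ≥0∞) (b : ℕ) (u : V) : hopDist w b u u = 0 := by
  have h : hopDist w b u u ≤ hopDist w 0 u u := hopDist_anti w u u (Nat.zero_le b)
  simpa [hopDist] using h

theorem hopDist_one_le (w : V → V → ℝ≥0∞) (u v : V) : hopDist w 1 u v ≤ w u v := by
  rw [hopDist]
  refine inf_le_right.trans ((iInf_le _ v).trans ?_)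
  simp [hopDist]

theorem hopDist_append (w : V → V → ℝ≥0∞) (a b : ℕ) (u x v : V) :
    hopDist w (a + b) u v ≤ hopDist w a u x + hopDist w b x v := by
  induction a generalizing u with
  | zero =>
    by_cases h : u = x
    · subst h; simp [hopDist]
    · simp [hopDist, h]
  | succ a ih =>
    have e : a + 1 + b = (a + b) + 1 := by omega
    rw [e]
    conv_rhs => rw [hopDist]
    rw [← min_add_add_right, ENNReal.iInf_add]
    refine le_min ((hopDist_mono_succ _ _ _ _).trans (ih u)) (le_iInf fun y => ?_)
    rw [hopDist, add_assoc]
    exact inf_le_right.trans ((iInf_le _ y).trans (add_le_add le_rfl (ih y)))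

theorem hopDist_append_le (w : V → V → ℝ≥0∞) {a b c : ℕ} (h : a + b ≤ c) {u x v : V}
    {p q : ℝ≥0∞} (hp : hopDist w a u x ≤ p) (hq : hopDist w b x v ≤ q) :
    hopDist w c u v ≤ p + q :=
  (hopDist_anti w u v h).trans ((hopDist_append w a b u x v).trans (add_le_add hp hq))

theorem hopDist_symm_le (w : V → V → ℝ≥0∞) (hw : ∀ u v, w u v = w v u) (b : ℕ) (u v : V) :
    hopDist w b v u ≤ hopDist w b u v := by
  induction b generalizing u with
  | zero => simp [hopDist, eq_comm]
  | succ b ih =>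
    conv_rhs => rw [hopDist]
    refine le_inf ((hopDist_mono_succ _ _ _ _).trans (ih u)) (le_iInf fun x => ?_)
    rw [add_comm (w u x), hw u x]
    exact hopDist_append_le w le_rfl (ih x) (hopDist_one_le w x u)

theorem hopDist_symm (w : V → V → ℝ≥0∞) (hw : ∀ u v, w u v = w v u) (b : ℕ) (u v : V) :
    hopDist w b u v = hopDist w b v u :=
  le_antisymm (hopDist_symm_le w hw b v u) (hopDist_symm_le w hw b u v)

theorem gdist_le_hopDist (w : V → V → ℝ≥0∞) (b : ℕ) (u v : V) :
    gdist w u v ≤ hopDist w b u v := iInf_le _ b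

theorem gdist_self (w : V → V → ℝ≥0∞) (u : V) : gdist w u u = 0 := by
  have := gdist_le_hopDist w 0 u u
  rw [hopDist_self] at this
  simpa using this

theorem gdist_le (w : V → V → ℝ≥0∞) (u v : V) : gdist w u v ≤ w u v :=
  (gdist_le_hopDist w 1 u v).trans (hopDist_one_le w u v)

theorem gdist_symm (w : V → V → ℝ≥0∞) (hw : ∀ u v, w u v = w v u) (u v : V) :
    gdist w u v = gdist w v u := by
  unfold gdist
  exact iInf_congr fun b => hopDist_symm w hw b u v

theorem gdist_triangle (w : V → V → ℝ≥0∞) (u x v : V) :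
    gdist w u v ≤ gdist w u x + gdist w x v := by
  conv_rhs => unfold gdist
  rw [ENNReal.iInf_add]
  refine le_iInf fun a => ?_
  rw [ENNReal.add_iInf]
  exact le_iInf fun b => (gdist_le_hopDist w (a + b) u v).trans (hopDist_append w a b u x v)

theorem addShortcuts_symm (w : V → V → ℝ≥0∞) (hw : ∀ u v, w u v = w v u) (H : Set (V × V))
    (u v : V) : addShortcuts w H u v = addShortcuts w H v u := by
  unfold addShortcuts
  rw [hw u v, gdist_symm w hw u v]
  simp only [or_comm]

theorem gdist_le_addShortcuts (w : V → V → ℝ≥0∞) (H : Set (V × V)) (u v : V) :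
    gdist w u v ≤ addShortcuts w H u v := by
  unfold addShortcuts
  refine le_inf (gdist_le w u v) ?_
  split_ifs <;> simp

theorem gdist_le_hopDist_addShortcuts (w : V → V → ℝ≥0∞) (H : Set (V × V)) (b : ℕ) (u v : V) :
    gdist w u v ≤ hopDist (addShortcuts w H) b u v := by
  induction b generalizing u with
  | zero =>
    by_cases h : u = v
    · subst h; simp [gdist_self]
    · simp [hopDist, h]
  | succ b ih =>
    rw [hopDist]
    refine le_inf (ih u) (le_iInf fun x => (gdist_triangle w u x v).trans ?_)
    exact add_le_add (gdist_le_addShortcuts w H u x) (ih x)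

theorem hopDist_shortcut (w : V → V → ℝ≥0∞) (H : Set (V × V)) {u v : V} (h : (u, v) ∈ H) :
    hopDist (addShortcuts w H) 1 u v ≤ gdist w u v := by
  refine (hopDist_one_le _ u v).trans ?_
  simp [addShortcuts, h]

theorem hopDist_edge (w : V → V → ℝ≥0∞) (H : Set (V × V)) (u v : V) :
    hopDist (addShortcuts w H) 1 u v ≤ w u v :=
  (hopDist_one_le _ u v).trans inf_le_left

theorem exists_next [Finite V] (w : V → V → ℝ≥0∞) {u v : V} (huv : u ≠ v) :
    ∃ x, w u x + gdist w x v ≤ gdist w u v := by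
  have : Nonempty V := ⟨u⟩
  obtain ⟨x, hx⟩ := Finite.exists_min (fun x => w u x + gdist w x v)
  refine ⟨x, le_iInf fun b => ?_⟩
  induction b with
  | zero => simp [hopDist, huv]
  | succ b ih =>
    rw [hopDist]
    exact le_inf ih (le_iInf fun y => (hx y).trans
      (add_le_add le_rfl (gdist_le_hopDist w b y v)))

/-- Greedy first segment of a shortest path. -/
theorem exists_segment [Finite V] (w : V → V → ℝ≥0∞) (hpos : ∀ u v, 0 < w u v)
    (t : ℝ≥0∞) {u y : V} (hfin : gdist w u y ≠ ⊤) :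
    ∃ v, gdist w u v ≤ t ∧ gdist w u v + gdist w v y ≤ gdist w u y ∧
      (v = y ∨ ∃ u', gdist w u v + (w v u' + gdist w u' y) ≤ gdist w u y ∧
        gdist w u u' + gdist w u' y ≤ gdist w u y ∧ t < gdist w u u') := by
  have := Fintype.ofFinite V
  let S : Finset V := Finset.univ.filter
    (fun v => gdist w u v ≤ t ∧ gdist w u v + gdist w v y ≤ gdist w u y)
  have hS : S.Nonempty := ⟨u, by simp [S, gdist_self]⟩
  obtain ⟨v, hv, hmin⟩ := S.exists_min_image (fun v => gdist w v y) hS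
  have hv' : gdist w u v ≤ t ∧ gdist w u v + gdist w v y ≤ gdist w u y := by
    simpa [S] using hv
  refine ⟨v, hv'.1, hv'.2, ?_⟩
  by_cases hvy : v = y
  · exact Or.inl hvy
  right
  obtain ⟨u', hu'⟩ := exists_next w hvy
  have h1 : gdist w u v + (w v u' + gdist w u' y) ≤ gdist w u y :=
    (add_le_add le_rfl hu').trans hv'.2
  have h2 : gdist w u u' + gdist w u' y ≤ gdist w u y := by
    refine le_trans ?_ h1
    rw [← add_assoc]
    exact add_le_add ((gdist_triangle w u v u').trans (add_le_add le_rfl (gdist_le w v u'))) le_rfl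
  refine ⟨u', h1, h2, ?_⟩
  by_contra hlt
  have hmem : u' ∈ S := by simp [S]; exact ⟨not_lt.mp hlt, h2⟩
  have h3 := hmin u' hmem
  have hfin' : gdist w u' y ≠ ⊤ := fun h => by
    rw [h, add_top] at h2; exact hfin (top_le_iff.mp h2)
  have h4 : gdist w u' y < w v u' + gdist w u' y := by
    rw [add_comm]
    exact ENNReal.lt_add_right hfin' (hpos _ _).ne'
  exact absurd (h4.trans_le (hu'.trans h3)) (lt_irrefl _)

/-- The level predicate. -/
def LevelOK (w W : V → V → ℝ≥0∞) (h : ℕ) (α : ℝ≥0∞) (A B : Set V) : Prop :=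
  ∀ x ∈ A, ∀ y ∈ A, hopDist W h x y ≤ α * gdist w x y ∨
    ∃ z ∈ B, hopDist W h x z ≤ α * gdist w x y

/-- Scanning the segments of a shortest path. -/
theorem scan [Finite V] (w W : V → V → ℝ≥0∞) (hw : ∀ u v, w u v = w v u)
    (hpos : ∀ u v, 0 < w u v) (hW : ∀ u v, W u v = W v u) (hWw : ∀ u v, W u v ≤ w u v)
    (h : ℕ) (α : ℝ≥0∞) (hα : 1 ≤ α) (A : Set V) (hL : LevelOK w W h α Set.univ A)
    (t : ℝ≥0∞) (ht : t ≠ ⊤) (y : V) (j : ℕ) :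
    ∀ u : V, gdist w u y ≤ (j + 1 : ℕ) * t →
      hopDist W (j * (h + 1) + h) u y ≤ α * gdist w u y ∨
      ∃ ul vr zl zr : V, ∃ j1 j3 : ℕ, j1 + j3 ≤ j ∧ zl ∈ A ∧ zr ∈ A ∧
        gdist w u ul + gdist w ul vr + gdist w vr y ≤ gdist w u y ∧
        hopDist W (j1 * (h + 1)) u ul ≤ α * gdist w u ul ∧
        hopDist W h ul zl ≤ α * t ∧ hopDist W h vr zr ≤ α * t ∧
        hopDist W (j3 * (h + 1)) vr y ≤ α * gdist w vr y := by
  have good_or : ∀ a b : V, gdist w a b ≤ t → hopDist W h a b ≤ α * gdist w a b ∨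
      ((∃ z ∈ A, hopDist W h a z ≤ α * t) ∧ (∃ z ∈ A, hopDist W h b z ≤ α * t)) := by
    intro a b hab
    have hm : α * gdist w a b ≤ α * t := mul_le_mul_right hab α
    rcases hL a trivial b trivial with h1 | ⟨z, hz, h1⟩
    · exact Or.inl h1
    rcases hL b trivial a trivial with h2 | ⟨z', hz', h2⟩
    · left; rwa [hopDist_symm W hW, gdist_symm w hw]
    · rw [gdist_symm w hw] at h2
      exact Or.inr ⟨⟨z, hz, h1.trans hm⟩, ⟨z', hz', h2.trans hm⟩⟩
  have hedge : ∀ a b : V, hopDist W 1 a b ≤ α * w a b := fun a b =>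
    (hopDist_one_le W a b).trans ((hWw a b).trans (le_mul_of_one_le_left (zero_le) hα))
  induction j with
  | zero =>
    intro u hu
    have hu' : gdist w u y ≤ t := by simpa using hu
    rcases good_or u y hu' with hg | ⟨⟨z, hz, h1⟩, ⟨z', hz', h2⟩⟩
    · left; simpa using hg
    · right
      exact ⟨u, y, z, z', 0, 0, le_rfl, hz, hz', by simp [gdist_self], by simp [hopDist_self],
        h1, h2, by simp [hopDist_self]⟩
  | succ j ih =>
    intro u hu
    have hfin : gdist w u y ≠ ⊤ := ne_top_of_le_ne_top
      (ENNReal.mul_ne_top (ENNReal.natCast_ne_top _) ht) hu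
    obtain ⟨v, hv1, hv2, hv3⟩ := exists_segment w hpos t hfin
    have hseg := good_or u v hv1
    rcases hv3 with rfl | ⟨u', h1, h2, h3⟩
    · rcases hseg with hg | ⟨⟨z, hz, hz1⟩, ⟨z', hz', hz2⟩⟩
      · left
        exact (hopDist_anti W u v (by omega)).trans hg
      · right
        exact ⟨u, v, z, z', 0, 0, by omega, hz, hz', by simp [gdist_self],
          by simp [hopDist_self], hz1, hz2, by simp [hopDist_self]⟩
    · have hrem : gdist w u' y ≤ (j + 1 : ℕ) * t := by
        have : t + gdist w u' y ≤ t + (j + 1 : ℕ) * t := by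
          calc t + gdist w u' y ≤ gdist w u u' + gdist w u' y := add_le_add h3.le le_rfl
            _ ≤ gdist w u y := h2
            _ ≤ (j + 1 + 1 : ℕ) * t := hu
            _ = t + (j + 1 : ℕ) * t := by push_cast; ring
        exact (ENNReal.add_le_add_iff_left ht).mp this
      have hihu := ih u' hrem
      rcases hseg with hg | ⟨⟨z, hz, hz1⟩, ⟨z', hz', hz2⟩⟩
      · have hgu : hopDist W (h + 1) u u' ≤ α * gdist w u v + α * w v u' :=
          hopDist_append_le W le_rfl hg (hedge v u')
        rcases hihu with hI | ⟨ul, vr, zl, zr, j1, j3, hj, hzl, hzr, hgeo, ha, hb, hc, hd⟩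
        · left
          calc hopDist W ((j + 1) * (h + 1) + h) u y
              ≤ (α * gdist w u v + α * w v u') + α * gdist w u' y :=
                hopDist_append_le W (by ring_nf; omega) hgu hI
            _ = α * (gdist w u v + (w v u' + gdist w u' y)) := by ring
            _ ≤ α * gdist w u y := mul_le_mul_right h1 α
        · right
          have hvu : gdist w u v + w v u' ≤ gdist w u u' := by
            have hfin' : gdist w u' y ≠ ⊤ := fun hh => by
              rw [hh, add_top] at h2; exact hfin (top_le_iff.mp h2)
            refine (ENNReal.add_le_add_iff_right hfin').mp ?_
            rw [add_assoc]
            exact h1.trans (gdist_triangle w u u' y)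
          have key : gdist w u v + w v u' + gdist w u' ul ≤ gdist w u ul := by
            have hR : gdist w ul vr + gdist w vr y ≠ ⊤ := fun hh => by
              rw [add_assoc, hh, add_top] at hgeo
              rw [top_le_iff.mp hgeo] at hrem
              exact ENNReal.mul_ne_top (ENNReal.natCast_ne_top _) ht (top_le_iff.mp hrem)
            refine (ENNReal.add_le_add_iff_right hR).mp ?_
            calc gdist w u v + w v u' + gdist w u' ul + (gdist w ul vr + gdist w vr y)
                = gdist w u v + (w v u' + (gdist w u' ul + gdist w ul vr + gdist w vr y)) := by ring
              _ ≤ gdist w u v + (w v u' + gdist w u' y) := by gcongr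
              _ ≤ gdist w u y := h1
              _ ≤ gdist w u ul + gdist w ul y := gdist_triangle w u ul y
              _ ≤ gdist w u ul + (gdist w ul vr + gdist w vr y) := by
                gcongr; exact gdist_triangle w ul vr y
          refine ⟨ul, vr, zl, zr, j1 + 1, j3, by omega, hzl, hzr, ?_, ?_, hb, hc, hd⟩
          · calc gdist w u ul + gdist w ul vr + gdist w vr y
                ≤ (gdist w u u' + gdist w u' ul) + gdist w ul vr + gdist w vr y := by
                  gcongr; exact gdist_triangle w u u' ul
              _ = gdist w u u' + (gdist w u' ul + gdist w ul vr + gdist w vr y) := by ring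
              _ ≤ gdist w u u' + gdist w u' y := by gcongr
              _ ≤ gdist w u y := h2
          · calc hopDist W ((j1 + 1) * (h + 1)) u ul
                ≤ (α * gdist w u v + α * w v u') + α * gdist w u' ul :=
                  hopDist_append_le W (by ring_nf; omega) hgu ha
              _ = α * (gdist w u v + w v u' + gdist w u' ul) := by ring
              _ ≤ α * gdist w u ul := mul_le_mul_right key α
      · right
        rcases hihu with hI | ⟨ul, vr, zl, zr, j1, j3, hj, hzl, hzr, hgeo, ha, hb, hc, hd⟩
        · refine ⟨u, v, z, z', 0, j + 1, by omega, hz, hz', ?_, by simp [hopDist_self],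
            hz1, hz2, ?_⟩
          · simpa [gdist_self] using hv2
          · have hvy : w v u' + gdist w u' y ≤ gdist w v y := by
              have hfin' : gdist w u v ≠ ⊤ := ne_top_of_le_ne_top ht hv1
              exact (ENNReal.add_le_add_iff_left hfin').mp (h1.trans (gdist_triangle w u v y))
            calc hopDist W ((j + 1) * (h + 1)) v y
                ≤ α * w v u' + α * gdist w u' y :=
                  hopDist_append_le W (by ring_nf; omega) (hedge v u') hI
              _ = α * (w v u' + gdist w u' y) := by ring
              _ ≤ α * gdist w v y := mul_le_mul_right hvy α
        · refine ⟨u, vr, z, zr, 0, j3, by omega, hz, hzr, ?_, by simp [hopDist_self],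
            hz1, hc, hd⟩
          rw [gdist_self, zero_add]
          calc gdist w u vr + gdist w vr y
              ≤ (gdist w u u' + (gdist w u' ul + gdist w ul vr)) + gdist w vr y := by
                gcongr
                exact (gdist_triangle w u u' vr).trans
                  (add_le_add le_rfl (gdist_triangle w u' ul vr))
            _ = gdist w u u' + (gdist w u' ul + gdist w ul vr + gdist w vr y) := by ring
            _ ≤ gdist w u u' + gdist w u' y := by gcongr
            _ ≤ gdist w u y := h2

/-- The inductive step of the stretch analysis. -/
theorem level_step [Finite V] (w W : V → V → ℝ≥0∞) (hw : ∀ u v, w u v = w v u)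
    (hpos : ∀ u v, 0 < w u v) (hW : ∀ u v, W u v = W v u) (hWw : ∀ u v, W u v ≤ w u v)
    (hgW : ∀ b u v, gdist w u v ≤ hopDist W b u v)
    (h h' r : ℕ) (hr : 1 ≤ r) (hh : h' + 1 = (r + 1) * (h + 1))
    (α : ℝ≥0∞) (hα : 1 ≤ α) (A B : Set V)
    (hL : LevelOK w W h α Set.univ A) (hE : LevelOK w W 1 1 A B) :
    LevelOK w W h' (α * (1 + 4 / r)) Set.univ B := by
  intro x _ y _
  obtain ⟨j, rfl⟩ : ∃ j, r = j + 1 := ⟨r - 1, by omega⟩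
  have hr0 : ((j + 1 : ℕ) : ℝ≥0∞) ≠ 0 := by exact_mod_cast Nat.succ_ne_zero j
  have hrt : ((j + 1 : ℕ) : ℝ≥0∞) ≠ ⊤ := ENNReal.natCast_ne_top _
  by_cases hfin : gdist w x y = ⊤
  · left
    rw [hfin, ENNReal.mul_top]
    · exact le_top
    · exact mul_ne_zero (zero_lt_one.trans_le hα).ne' (by simp)
  set D := gdist w x y with hD
  obtain ⟨t, ht⟩ : ∃ t, t = D / (j + 1 : ℕ) := ⟨_, rfl⟩
  have htop : t ≠ ⊤ := by rw [ht]; exact ENNReal.div_ne_top hfin hr0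
  have hDt : ((j + 1 : ℕ) : ℝ≥0∞) * t = D := by
    rw [ht]; exact ENNReal.mul_div_cancel hr0 hrt
  have hgoal : α * (1 + 4 / ((j + 1 : ℕ) : ℝ≥0∞)) * D = α * D + 4 * (α * t) := by
    rw [ht, ENNReal.div_eq_inv_mul, ENNReal.div_eq_inv_mul]; ring
  rw [hgoal]
  have hexp : h' = j * (h + 1) + (h + 1) + h := by
    have : h' + 1 = j * (h + 1) + (h + 1) + (h + 1) := by rw [hh]; ring
    omega
  rcases scan w W hw hpos hW hWw h α hα A hL t htop y j x hDt.ge with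
    hI | ⟨ul, vr, zl, zr, j1, j3, hj, hzl, hzr, hgeo, ha, hb, hc, hd⟩
  · left
    exact ((hopDist_anti W x y (by omega)).trans hI).trans le_self_add
  have hjm : j1 * (h + 1) + j3 * (h + 1) ≤ j * (h + 1) := by
    rw [← add_mul]; exact Nat.mul_le_mul_right _ hj
  have hzz : gdist w zl zr ≤ α * t + α * gdist w ul vr + α * t := by
    have e1 : gdist w zl ul ≤ α * t := by
      rw [gdist_symm w hw]; exact (hgW h ul zl).trans hb
    have e2 : gdist w vr zr ≤ α * t := (hgW h vr zr).trans hc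
    have e3 : gdist w ul vr ≤ α * gdist w ul vr := le_mul_of_one_le_left (zero_le) hα
    exact (gdist_triangle w zl vr zr).trans (add_le_add ((gdist_triangle w zl ul vr).trans
      (add_le_add e1 e3)) e2)
  have hleft : hopDist W (j1 * (h + 1) + h) x zl ≤ α * gdist w x ul + α * t :=
    hopDist_append_le W le_rfl ha hb
  rcases hE zl hzl zr hzr with h1 | ⟨p, hp, h1⟩
  · left
    rw [one_mul] at h1
    have h2 := hopDist_append_le W le_rfl hleft (h1.trans hzz)
    have hc' : hopDist W h zr vr ≤ α * t := by rwa [hopDist_symm W hW]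
    have h3 := hopDist_append_le W le_rfl hc' hd
    refine (hopDist_append_le W (by omega) h2 h3).trans ?_
    calc _ = α * (gdist w x ul + gdist w ul vr + gdist w vr y) + 4 * (α * t) := by ring
      _ ≤ α * D + 4 * (α * t) := by gcongr
  · right
    rw [one_mul] at h1
    refine ⟨p, hp, (hopDist_append_le W (by omega) hleft (h1.trans hzz)).trans ?_⟩
    calc α * gdist w x ul + α * t + (α * t + α * gdist w ul vr + α * t)
        = α * (gdist w x ul + gdist w ul vr + 0) + 3 * (α * t) := by ring
      _ ≤ α * (gdist w x ul + gdist w ul vr + gdist w vr y) + 4 * (α * t) := by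
        gcongr
        · exact zero_le
        · norm_num
      _ ≤ α * D + 4 * (α * t) := by gcongr

end Basics

/-! ### Choosing the samples -/

/-- Averaging: a sample of size `s` for which the bunches are small. -/
theorem exists_sample {V : Type*} (d : V → V → ℝ≥0∞) (A : Finset V) (s : ℕ) :
    ∃ B : Finset V, B.card ≤ s ∧
      (s + 1) * ((A ×ˢ A).filter (fun p => ∀ t ∈ B, d p.1 p.2 < d p.1 t)).card ≤ A.card ^ 2 := by
  by_cases hs : A.card ≤ s
  · refine ⟨A, hs, ?_⟩
    have h0 : ((A ×ˢ A).filter (fun p => ∀ t ∈ A, d p.1 p.2 < d p.1 t)) = ∅ := by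
      refine Finset.eq_empty_of_forall_notMem fun p hp => ?_
      have hp' : p ∈ A ×ˢ A ∧ ∀ t ∈ A, d p.1 p.2 < d p.1 t := by
        simpa only [Finset.mem_filter] using hp
      exact lt_irrefl _ (hp'.2 p.2 (Finset.mem_product.mp hp'.1).2)
    rw [h0]
    simp
  push Not at hs
  let P := A.powersetCard s
  let cost : Finset V → ℕ := fun B =>
    ((A ×ˢ A).filter (fun p => ∀ t ∈ B, d p.1 p.2 < d p.1 t)).card
  have hP : P.card = A.card.choose s := Finset.card_powersetCard s A
  have hPne : P.Nonempty := Finset.powersetCard_nonempty.mpr hs.le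
  have hcost : ∀ B, cost B = ∑ v ∈ A, (A.filter (fun u => ∀ t ∈ B, d v u < d v t)).card := by
    intro B
    simp only [cost, Finset.card_filter, Finset.sum_product]
    refine Finset.sum_congr rfl fun x _ => Finset.sum_congr rfl fun y _ => ?_
    congr
  have hv : ∀ v ∈ A, ∑ B ∈ P, (A.filter (fun u => ∀ t ∈ B, d v u < d v t)).card
      ≤ A.card.choose (s + 1) := by
    intro v _
    rw [← Finset.card_sigma, ← Finset.card_powersetCard]
    apply Finset.card_le_card_of_injOn (fun q => insert q.2 q.1)
    · rintro ⟨B, u⟩ hq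
      simp only [Finset.coe_sigma, Set.mem_sigma_iff, Finset.mem_coe, Finset.mem_filter, P,
        Finset.mem_powersetCard] at hq
      obtain ⟨⟨hB, hc⟩, hu, hlt⟩ := hq
      have hnot : u ∉ B := fun h => lt_irrefl _ (hlt u h)
      simp only [Finset.mem_coe, Finset.mem_powersetCard]
      exact ⟨Finset.insert_subset hu hB, by rw [Finset.card_insert_of_notMem hnot, hc]⟩
    · rintro ⟨B, u⟩ hq ⟨B', u'⟩ hq' heq
      simp only [Finset.coe_sigma, Set.mem_sigma_iff, Finset.mem_coe, Finset.mem_filter, P,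
        Finset.mem_powersetCard] at hq hq'
      obtain ⟨_, _, hlt⟩ := hq
      obtain ⟨_, _, hlt'⟩ := hq'
      have hnot : u ∉ B := fun h => lt_irrefl _ (hlt u h)
      have hnot' : u' ∉ B' := fun h => lt_irrefl _ (hlt' u' h)
      simp only at heq
      have huu : u = u' := by
        by_contra hne
        have m1 : u ∈ B' := by
          have : u ∈ insert u' B' := heq ▸ Finset.mem_insert_self u B
          exact (Finset.mem_insert.mp this).resolve_left hne
        have m2 : u' ∈ B := by
          have : u' ∈ insert u B := heq ▸ Finset.mem_insert_self u' B'
          exact (Finset.mem_insert.mp this).resolve_left (Ne.symm hne)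
        exact lt_asymm (hlt u' m2) (hlt' u m1)
      subst huu
      have : B = B' := by
        rw [← Finset.erase_insert hnot, ← Finset.erase_insert hnot', heq]
      subst this
      rfl
  have htot : ∑ B ∈ P, (s + 1) * cost B ≤ ∑ B ∈ P, A.card ^ 2 := by
    rw [← Finset.mul_sum, Finset.sum_const, hP, smul_eq_mul]
    simp only [hcost]
    rw [Finset.sum_comm]
    have h1 := Finset.sum_le_card_nsmul A _ _ hv
    rw [smul_eq_mul] at h1
    have h2 := Nat.choose_succ_right_eq A.card s
    calc (s + 1) * _ ≤ (s + 1) * (A.card * A.card.choose (s + 1)) := Nat.mul_le_mul_left _ h1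
      _ = A.card * (A.card.choose (s + 1) * (s + 1)) := by ring
      _ = A.card * (A.card.choose s * (A.card - s)) := by rw [h2]
      _ ≤ A.card * (A.card.choose s * A.card) := by gcongr; omega
      _ = A.card.choose s * A.card ^ 2 := by ring
  obtain ⟨B, hB, hle⟩ := Finset.exists_le_of_sum_le hPne htot
  exact ⟨B, (Finset.mem_powersetCard.mp hB).2.le, hle⟩

/-- One level of the construction. -/
theorem exists_level {V : Type*} (d : V → V → ℝ≥0∞) (A : Finset V) (m : ℝ) (hm : 0 < m) :
    ∃ (B : Finset V) (F : Finset (V × V)), (B.card : ℝ) ≤ m ∧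
      (F.card : ℝ) ≤ (A.card : ℝ) ^ 2 / m + A.card ∧
      ∀ a ∈ A, ∀ b ∈ A, (a, b) ∈ F ∨ ∃ z ∈ B, (a, z) ∈ F ∧ d a z ≤ d a b := by
  obtain ⟨B, hB, hc⟩ := exists_sample d A ⌊m⌋₊
  have hp : ∃ p : V → V, B.Nonempty → ∀ a, p a ∈ B ∧ ∀ t ∈ B, d a (p a) ≤ d a t := by
    by_cases hBn : B.Nonempty
    · have := fun a => B.exists_min_image (fun t => d a t) hBn
      choose p hp1 hp2 using this
      exact ⟨p, fun _ a => ⟨hp1 a, hp2 a⟩⟩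
    · exact ⟨id, fun h => absurd h hBn⟩
  obtain ⟨p, hp⟩ := hp
  set Bu := (A ×ˢ A).filter (fun p => ∀ t ∈ B, d p.1 p.2 < d p.1 t) with hBu
  refine ⟨B, Bu ∪ A.image (fun a => (a, p a)), ?_, ?_, ?_⟩
  · exact (Nat.cast_le.mpr hB).trans (Nat.floor_le hm.le)
  · have h1 : (Bu ∪ A.image (fun a => (a, p a))).card ≤ Bu.card + A.card :=
      (Finset.card_union_le _ _).trans (add_le_add le_rfl Finset.card_image_le)
    have h2 : ((Bu ∪ A.image (fun a => (a, p a))).card : ℝ) ≤ Bu.card + A.card := by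
      exact_mod_cast h1
    refine h2.trans (add_le_add ?_ le_rfl)
    rw [le_div_iff₀ hm]
    have h3 : ((⌊m⌋₊ : ℝ) + 1) * Bu.card ≤ (A.card : ℝ) ^ 2 := by exact_mod_cast hc
    have h4 : m ≤ (⌊m⌋₊ : ℝ) + 1 := (Nat.lt_floor_add_one m).le
    calc (Bu.card : ℝ) * m ≤ Bu.card * ((⌊m⌋₊ : ℝ) + 1) := by gcongr
      _ = ((⌊m⌋₊ : ℝ) + 1) * Bu.card := mul_comm _ _
      _ ≤ _ := h3
  · intro a ha b hb
    by_cases hall : ∀ t ∈ B, d a b < d a t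
    · left
      apply Finset.mem_union_left
      simp [hBu, ha, hb]
      exact hall
    · right
      push Not at hall
      obtain ⟨t, ht, hle⟩ := hall
      have := hp ⟨t, ht⟩ a
      exact ⟨p a, this.1, Finset.mem_union_right _ (Finset.mem_image_of_mem _ ha),
        (this.2 t ht).trans hle⟩

/-- Target sizes of the samples. -/
noncomputable def sizeTarget (n N : ℝ) (i : ℕ) : ℝ :=
  n ^ (1 - ((2 : ℝ) ^ i - 1) / N) * (1 / 2) ^ i

theorem sizeTarget_pos {n : ℝ} (hn : 0 < n) (N : ℝ) (i : ℕ) : 0 < sizeTarget n N i := by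
  unfold sizeTarget; positivity

theorem sizeTarget_ratio {n : ℝ} (hn : 0 < n) {N : ℝ} (hN : N ≠ 0) (i : ℕ) :
    sizeTarget n N i ^ 2 / sizeTarget n N (i + 1) = 2 * (n ^ (1 + 1 / N) * (1 / 2) ^ i) := by
  rw [div_eq_iff (sizeTarget_pos hn N (i + 1)).ne']
  unfold sizeTarget
  have h : (n ^ (1 - ((2 : ℝ) ^ i - 1) / N)) ^ 2
      = n ^ (1 + 1 / N) * n ^ (1 - ((2 : ℝ) ^ (i + 1) - 1) / N) := by
    rw [← Real.rpow_add hn, ← Real.rpow_natCast, ← Real.rpow_mul hn.le]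
    congr 1
    field_simp
    push_cast
    ring
  rw [mul_pow, h]
  ring

theorem sizeTarget_le {n : ℝ} (hn : 1 ≤ n) {N : ℝ} (hN : 0 < N) (i : ℕ) :
    sizeTarget n N i ≤ n ^ (1 + 1 / N) * (1 / 2) ^ i := by
  unfold sizeTarget
  refine mul_le_mul_of_nonneg_right (Real.rpow_le_rpow_of_exponent_le hn ?_) (by positivity)
  have h1 : 0 ≤ ((2 : ℝ) ^ i - 1) / N :=
    div_nonneg (sub_nonneg.mpr (one_le_pow₀ (by norm_num))) hN.le
  have h2 : 0 < 1 / N := by positivity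
  linarith

theorem half_sum_le (k : ℕ) : ∑ i ∈ Finset.range k, ((1 : ℝ) / 2) ^ i ≤ 2 := by
  have : ∑ i ∈ Finset.range k, ((1 : ℝ) / 2) ^ i = 2 - 2 * (1 / 2) ^ k := by
    induction k with
    | zero => simp
    | succ k ih => rw [Finset.sum_range_succ, ih]; ring
  rw [this]
  have : (0 : ℝ) < (1 / 2) ^ k := by positivity
  linarith

/-- The whole hierarchy. -/
theorem exists_hierarchy {V : Type} [Fintype V] [Nonempty V] (d : V → V → ℝ≥0∞) (k : ℕ) :
    ∃ (A : ℕ → Finset V) (H : Finset (V × V)), A 0 = Finset.univ ∧ A (k + 1) = ∅ ∧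
      (H.card : ℝ) ≤ 6 * (Fintype.card V : ℝ) ^ ((1 : ℝ) + 1 / ((2 : ℝ) ^ (k + 1) - 1)) ∧
      ∀ i ≤ k, ∀ a ∈ A i, ∀ b ∈ A i,
        (a, b) ∈ H ∨ ∃ z ∈ A (i + 1), (a, z) ∈ H ∧ d a z ≤ d a b := by
  set n : ℝ := (Fintype.card V : ℝ) with hn
  set N : ℝ := (2 : ℝ) ^ (k + 1) - 1 with hNdef
  have hn1 : 1 ≤ n := by rw [hn]; exact_mod_cast Fintype.card_pos
  have hn0 : 0 < n := by linarith
  have hN : 0 < N := by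
    have : (1 : ℝ) < 2 ^ (k + 1) := one_lt_pow₀ (by norm_num) (by omega)
    rw [hNdef]; linarith
  let m := sizeTarget n N
  have hm : ∀ i, 0 < m i := sizeTarget_pos hn0 N
  have hex := fun (A : Finset V) (i : ℕ) => exists_level d A (m (i + 1)) (hm (i + 1))
  choose fB fF h1 h2 h3 using hex
  let A : ℕ → Finset V := fun i => Nat.rec Finset.univ (fun i A => fB A i) i
  have hA0 : A 0 = Finset.univ := rfl
  have hAs : ∀ i, A (i + 1) = fB (A i) i := fun i => rfl
  have hcard : ∀ i, ((A i).card : ℝ) ≤ m i := by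
    intro i
    cases i with
    | zero => rw [hA0]; simp [m, sizeTarget, hn]
    | succ i => rw [hAs]; exact h1 _ _
  refine ⟨A, (Finset.range (k + 1)).biUnion (fun i => fF (A i) i), hA0, ?_, ?_, ?_⟩
  · have hlt : ((A (k + 1)).card : ℝ) < 1 := by
      refine (hcard (k + 1)).trans_lt ?_
      have : m (k + 1) = (1 / 2) ^ (k + 1) := by
        simp only [m, sizeTarget]
        rw [← hNdef, div_self hN.ne']; simp
      rw [this]
      exact pow_lt_one₀ (by norm_num) (by norm_num) (by omega)
    have : (A (k + 1)).card < 1 := by exact_mod_cast hlt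
    exact Finset.card_eq_zero.mp (by omega)
  · have hb : ((((Finset.range (k + 1)).biUnion (fun i => fF (A i) i)).card : ℕ) : ℝ)
        ≤ ∑ i ∈ Finset.range (k + 1), ((fF (A i) i).card : ℝ) := by
      exact_mod_cast Finset.card_biUnion_le
    refine hb.trans ?_
    have hterm : ∀ i ∈ Finset.range (k + 1), ((fF (A i) i).card : ℝ)
        ≤ 3 * n ^ (1 + 1 / N) * (1 / 2) ^ i := by
      intro i _
      have e1 : ((A i).card : ℝ) ^ 2 / m (i + 1) ≤ m i ^ 2 / m (i + 1) := by
        have := hcard i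
        have := hm (i + 1)
        gcongr
      have e2 : m i ^ 2 / m (i + 1) = 2 * (n ^ (1 + 1 / N) * (1 / 2) ^ i) :=
        sizeTarget_ratio hn0 hN.ne' i
      have e3 : m i ≤ n ^ (1 + 1 / N) * (1 / 2) ^ i := sizeTarget_le hn1 hN i
      have e4 := h2 (A i) i
      have e5 := hcard i
      linarith
    refine (Finset.sum_le_sum hterm).trans ?_
    rw [← Finset.mul_sum]
    have hp : 0 ≤ n ^ (1 + 1 / N) := by positivity
    nlinarith [half_sum_le (k + 1)]
  · intro i hi a ha b hb
    have hsub : fF (A i) i ⊆ (Finset.range (k + 1)).biUnion (fun i => fF (A i) i) :=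
      Finset.subset_biUnion_of_mem (fun i => fF (A i) i) (Finset.mem_range.mpr (by omega))
    rcases h3 (A i) i a ha b hb with h | ⟨z, hz, hz1, hz2⟩
    · exact Or.inl (hsub h)
    · exact Or.inr ⟨z, hz, hsub hz1, hz2⟩

theorem stretch_bound (k : ℕ) (ε : ℝ) (hε : 0 < ε) (r : ℕ) (hr : 1 ≤ r)
    (hr' : 4 * (k : ℝ) / Real.log (1 + ε) ≤ r) :
    ((1 : ℝ≥0∞) + 4 / r) ^ k ≤ ENNReal.ofReal (1 + ε) := by
  have hr0 : (0 : ℝ) < r := by exact_mod_cast hr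
  have hlog : 0 < Real.log (1 + ε) := Real.log_pos (by linarith)
  have e : ((1 : ℝ≥0∞) + 4 / r) = ENNReal.ofReal (1 + 4 / r) := by
    rw [ENNReal.ofReal_add (by norm_num) (by positivity), ENNReal.ofReal_div_of_pos hr0]
    simp
  rw [e, ← ENNReal.ofReal_pow (by positivity)]
  apply ENNReal.ofReal_le_ofReal
  have h1 : (1 : ℝ) + 4 / r ≤ Real.exp (4 / r) := by
    have := Real.add_one_le_exp (4 / (r : ℝ)); linarith
  calc ((1 : ℝ) + 4 / r) ^ k ≤ Real.exp (4 / r) ^ k := by gcongr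
    _ = Real.exp (k * (4 / r)) := (Real.exp_nat_mul _ _).symm
    _ ≤ Real.exp (Real.log (1 + ε)) := by
      apply Real.exp_le_exp.mpr
      rw [div_le_iff₀ hlog] at hr'
      rw [← mul_div_assoc, div_le_iff₀ hr0]
      linarith
    _ = 1 + ε := Real.exp_log (by linarith)

/-- Every weighted undirected graph with positive edge weights on `n`
vertices has, for every `k ≥ 1` and `ε > 0`, a `(β, ε)`-hopset of size at most
`C · n^(1 + 1/(2^(k+1) - 1))` for an absolute constant `C`, where
`β = 2(r+1)^k` and `r = ⌈4k / ln(1+ε)⌉`. -/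
theorem hopset_exists :
    ∃ C : ℝ, 0 < C ∧
      ∀ (V : Type) [Fintype V] (w : V → V → ℝ≥0∞),
        (∀ u v : V, w u v = w v u) → (∀ u v : V, 0 < w u v) →
        ∀ k : ℕ, 1 ≤ k → ∀ ε : ℝ, 0 < ε →
          ∃ H : Finset (V × V),
            (H.card : ℝ) ≤
              C * (Fintype.card V : ℝ) ^ ((1 : ℝ) + 1 / ((2 : ℝ) ^ (k + 1) - 1)) ∧
            IsHopset w (↑H : Set (V × V))
              (2 * (⌈(4 * (k : ℝ)) / Real.log (1 + ε)⌉₊ + 1) ^ k) ε := by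
  refine ⟨6, by norm_num, ?_⟩
  intro V _ w hw hpos k hk ε hε
  rcases isEmpty_or_nonempty V with hV | hV
  · refine ⟨∅, ?_, fun u => (hV.false u).elim⟩
    simp only [Finset.card_empty, Nat.cast_zero]
    positivity
  obtain ⟨A, H, hA0, hAk, hcard, hH⟩ := exists_hierarchy (gdist w) k
  refine ⟨H, hcard, ?_⟩
  set r := ⌈(4 * (k : ℝ)) / Real.log (1 + ε)⌉₊ with hrdef
  have hlog : 0 < Real.log (1 + ε) := Real.log_pos (by linarith)
  have hk0 : (0 : ℝ) < k := by exact_mod_cast hk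
  have hr : 1 ≤ r := Nat.one_le_iff_ne_zero.mpr (Nat.ceil_pos.mpr (by positivity)).ne'
  have hr' : 4 * (k : ℝ) / Real.log (1 + ε) ≤ r := Nat.le_ceil _
  set W := addShortcuts w (↑H : Set (V × V)) with hWdef
  have hE : ∀ i ≤ k, LevelOK w W 1 1 (↑(A i) : Set V) (↑(A (i + 1)) : Set V) := by
    intro i hi a ha b hb
    rcases hH i hi a ha b hb with h | ⟨z, hz, hz1, hz2⟩
    · left
      rw [one_mul]
      exact hopDist_shortcut w _ (Finset.mem_coe.mpr h)
    · right
      rw [one_mul]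
      exact ⟨z, hz, (hopDist_shortcut w _ (Finset.mem_coe.mpr hz1)).trans hz2⟩
  have hlev : ∀ i ≤ k, LevelOK w W (2 * (r + 1) ^ i - 1) ((1 + 4 / (r : ℝ≥0∞)) ^ i)
      Set.univ (↑(A (i + 1)) : Set V) := by
    intro i
    induction i with
    | zero =>
      intro hi
      have := hE 0 hi
      rw [hA0, Finset.coe_univ] at this
      simpa using this
    | succ i ih =>
      intro hi
      have hpw : ∀ j, 1 ≤ (r + 1) ^ j := fun j => Nat.one_le_pow _ _ (by omega)
      rw [pow_succ (1 + 4 / (r : ℝ≥0∞))]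
      refine level_step w W hw hpos (addShortcuts_symm w hw _) (fun u v => inf_le_left)
        (gdist_le_hopDist_addShortcuts w _) (2 * (r + 1) ^ i - 1) _ r hr ?_ _
        (one_le_pow₀ le_self_add) _ _ (ih (by omega)) (hE (i + 1) hi)
      have h1 := hpw i
      have h2 := hpw (i + 1)
      rw [Nat.sub_add_cancel (by omega), Nat.sub_add_cancel (by omega)]
      ring
  intro u v
  refine ⟨gdist_le_hopDist_addShortcuts w _ _ u v, ?_⟩
  rcases hlev k le_rfl u trivial v trivial with h | ⟨z, hz, _⟩
  · refine (hopDist_anti W u v (Nat.sub_le _ 1)).trans (h.trans ?_)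
    gcongr
    exact stretch_bound k ε hε r hr hr'
  · rw [hAk] at hz
    simp at hz
end

section
/- There is an absolute constant C such that every weighted undirected graph G with positive edge weights on n vertices admits a (β, ε)-hopset H of size at most C·n, for every real ε > 0, where β = 2(r+1)^k with k = ⌈log₂ log₂ n⌉ and r = ⌈4k / ln(1+ε)⌉. -/
open scoped ENNReal
open Classical

namespace HopAux

variable {V : Type}

/-! ### Basic facts on hop distances -/

lemma hop_succ_le (w : V → V → ℝ≥0∞) (β : ℕ) (u v : V) :
    hopDist w (β + 1) u v ≤ hopDist w β u v := by
  rw [hopDist]; exact inf_le_left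

lemma hop_mono (w : V → V → ℝ≥0∞) (u v : V) {a b : ℕ} (h : a ≤ b) :
    hopDist w b u v ≤ hopDist w a u v :=
  antitone_nat_of_succ_le (f := fun β => hopDist w β u v) (fun β => hop_succ_le w β u v) h

lemma hop_step (w : V → V → ℝ≥0∞) (β : ℕ) (u x v : V) :
    hopDist w (β + 1) u v ≤ w u x + hopDist w β x v := by
  rw [hopDist]; exact inf_le_right.trans (iInf_le _ x)

lemma hop_zero_self (w : V → V → ℝ≥0∞) (u : V) : hopDist w 0 u u = 0 := by
  simp [hopDist]

lemma hop_one (w : V → V → ℝ≥0∞) (u v : V) : hopDist w 1 u v ≤ w u v := by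
  have := hop_step w 0 u v v
  simpa [hop_zero_self] using this

lemma hop_add (w : V → V → ℝ≥0∞) (b : ℕ) (x v : V) : ∀ (a : ℕ) (u : V),
    hopDist w (a + b) u v ≤ hopDist w a u x + hopDist w b x v := by
  intro a
  induction a with
  | zero =>
    intro u
    by_cases h : u = x
    · subst h; simp [hopDist]
    · simp [hopDist, h]
  | succ a ih =>
    intro u
    have e : a + 1 + b = (a + b) + 1 := by omega
    rw [e]
    conv_rhs => rw [hopDist]
    rw [← min_add_add_right, ENNReal.iInf_add]
    refine le_min ((hop_succ_le w _ u v).trans (ih u)) (le_iInf fun y => ?_)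
    rw [add_assoc (w u y)]
    exact (hop_step w (a + b) u y v).trans (add_le_add le_rfl (ih y))

lemma hop_symm (w : V → V → ℝ≥0∞) (hw : ∀ u v, w u v = w v u) :
    ∀ (a : ℕ) (u v : V), hopDist w a u v = hopDist w a v u := by
  have key : ∀ (a : ℕ) (u v : V), hopDist w a v u ≤ hopDist w a u v := by
    intro a
    induction a with
    | zero => intro u v; simp [hopDist, eq_comm]
    | succ a ih =>
      intro u v
      conv_rhs => rw [hopDist]
      refine le_inf ((hop_succ_le w _ v u).trans (ih u v)) (le_iInf fun y => ?_)
      have h1 := hop_add w 1 y u a v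
      refine h1.trans ?_
      rw [add_comm]
      gcongr
      · rw [hw u y]; exact hop_one w y u
      · exact ih y v
  intro a u v
  exact le_antisymm (key a v u) (key a u v)

lemma gdist_le_hop (w : V → V → ℝ≥0∞) (a : ℕ) (u v : V) : gdist w u v ≤ hopDist w a u v :=
  iInf_le _ a

lemma gdist_self (w : V → V → ℝ≥0∞) (u : V) : gdist w u u = 0 :=
  le_antisymm ((gdist_le_hop w 0 u u).trans (hop_zero_self w u).le) bot_le

lemma gdist_tri (w : V → V → ℝ≥0∞) (u x v : V) :
    gdist w u v ≤ gdist w u x + gdist w x v := by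
  unfold gdist
  rw [ENNReal.iInf_add]
  refine le_iInf fun a => ?_
  rw [ENNReal.add_iInf]
  exact le_iInf fun b => (iInf_le _ (a + b)).trans (hop_add w b x v a u)

lemma gdist_symm (w : V → V → ℝ≥0∞) (hw : ∀ u v, w u v = w v u) (u v : V) :
    gdist w u v = gdist w v u := by
  unfold gdist
  exact iInf_congr fun a => hop_symm w hw a u v

lemma gdist_le_w (w : V → V → ℝ≥0∞) (u v : V) : gdist w u v ≤ w u v :=
  (gdist_le_hop w 1 u v).trans (hop_one w u v)

/-- The next vertex on a shortest path. -/
lemma exists_next [Fintype V] (w : V → V → ℝ≥0∞) (u v : V) (huv : u ≠ v) :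
    ∃ x, w u x + gdist w x v ≤ gdist w u v := by
  obtain ⟨x, -, hx⟩ := Finset.exists_min_image (Finset.univ : Finset V)
    (fun x => w u x + gdist w x v) ⟨u, Finset.mem_univ u⟩
  refine ⟨x, ?_⟩
  refine le_iInf fun β => ?_
  induction β with
  | zero => simp [hopDist, huv]
  | succ β ih =>
    rw [hopDist]
    refine le_inf ih (le_iInf fun y => ?_)
    refine (hx y (Finset.mem_univ y)).trans ?_
    gcongr
    exact gdist_le_hop w β y v

lemma short_le_w (w : V → V → ℝ≥0∞) (H : Set (V × V)) (u v : V) :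
    addShortcuts w H u v ≤ w u v := inf_le_left

lemma short_le_gdist (w : V → V → ℝ≥0∞) (H : Set (V × V)) (u v : V) (h : (u, v) ∈ H) :
    addShortcuts w H u v ≤ gdist w u v := by
  unfold addShortcuts
  rw [if_pos (Or.inl h)]
  exact inf_le_right

lemma gdist_le_short (w : V → V → ℝ≥0∞) (H : Set (V × V)) (u v : V) :
    gdist w u v ≤ addShortcuts w H u v := by
  unfold addShortcuts
  refine le_inf (gdist_le_w w u v) ?_
  split_ifs <;> simp

lemma short_symm (w : V → V → ℝ≥0∞) (hw : ∀ u v, w u v = w v u) (H : Set (V × V)) (u v : V) :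
    addShortcuts w H u v = addShortcuts w H v u := by
  unfold addShortcuts
  rw [hw u v, gdist_symm w hw u v]
  simp only [or_comm]

lemma gdist_le_hop_short (w : V → V → ℝ≥0∞) (H : Set (V × V)) (v : V) : ∀ (β : ℕ) (u : V),
    gdist w u v ≤ hopDist (addShortcuts w H) β u v := by
  intro β
  induction β with
  | zero =>
    intro u
    by_cases h : u = v
    · subst h; simp [gdist_self]
    · simp [hopDist, h]
  | succ β ih =>
    intro u
    rw [hopDist]
    refine le_inf (ih u) (le_iInf fun y => ?_)
    exact (gdist_tri w u y v).trans (add_le_add (gdist_le_short w H u y) (ih y))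

/-! ### Cutting shortest paths into segments -/

lemma first_segment [Fintype V] (w : V → V → ℝ≥0∞) (hpos : ∀ u v, 0 < w u v)
    (z v : V) (L : ℝ≥0∞) (hfin : gdist w z v ≠ ⊤) :
    ∃ y, gdist w z y ≤ L ∧ gdist w z y + gdist w y v = gdist w z v ∧
      (y = v ∨ ∃ z', gdist w z y + (w y z' + gdist w z' v) = gdist w z v ∧
        L < gdist w z z' ∧ gdist w z z' + gdist w z' v = gdist w z v) := by
  let T : Finset V := Finset.univ.filter
    (fun y => gdist w z y ≤ L ∧ gdist w z y + gdist w y v = gdist w z v)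
  have hz : z ∈ T := by simp [T, gdist_self]
  obtain ⟨y, hyT, hmax⟩ := T.exists_max_image (fun y => gdist w z y) ⟨z, hz⟩
  have hy : gdist w z y ≤ L ∧ gdist w z y + gdist w y v = gdist w z v := by
    simpa [T] using hyT
  refine ⟨y, hy.1, hy.2, ?_⟩
  by_cases hyv : y = v
  · exact Or.inl hyv
  right
  obtain ⟨x, hx⟩ := exists_next w y v hyv
  have h1 : gdist w z x ≤ gdist w z y + w y x :=
    (gdist_tri w z y x).trans (by gcongr; exact gdist_le_w w y x)
  have h2 : gdist w z v ≤ gdist w z x + gdist w x v := gdist_tri w z x v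
  have h3 : gdist w z x + gdist w x v ≤ gdist w z y + (w y x + gdist w x v) := by
    rw [← add_assoc]; gcongr
  have h4 : gdist w z y + (w y x + gdist w x v) ≤ gdist w z v := by
    rw [← hy.2]; gcongr
  have h5 : gdist w z y + (w y x + gdist w x v) = gdist w z v := le_antisymm h4 (h2.trans h3)
  have h6 : gdist w z x + gdist w x v = gdist w z v := le_antisymm (h3.trans h4) h2
  refine ⟨x, h5, ?_, h6⟩
  by_contra hcon
  rw [not_lt] at hcon
  have hxT : x ∈ T := by simp [T, hcon, h6]
  have h7 : gdist w z x ≤ gdist w z y := hmax x hxT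
  have hyfin : gdist w z y ≠ ⊤ := fun h => by simp [h] at h5; exact hfin h5.symm
  have hxfin : gdist w x v ≠ ⊤ := fun h => by simp [h] at h5; exact hfin h5.symm
  have h8 : gdist w z y + w y x + gdist w x v ≤ gdist w z y + gdist w x v := by
    rw [add_assoc, h5, ← h6]; gcongr
  have h9 : gdist w z y + w y x ≤ gdist w z y := (ENNReal.add_le_add_iff_right hxfin).1 h8
  exact absurd h9 (not_le.2 (ENNReal.lt_add_right hyfin (hpos y x).ne'))

lemma segments [Fintype V] (w : V → V → ℝ≥0∞) (hw : ∀ u v, w u v = w v u)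
    (hpos : ∀ u v, 0 < w u v) (H : Set (V × V)) (A : Finset V) (h : ℕ) (S L : ℝ≥0∞)
    (hS : 1 ≤ S)
    (hF : ∀ z y, gdist w z y ≠ ⊤ →
      hopDist (addShortcuts w H) h z y ≤ S * gdist w z y ∨
      ∃ x ∈ A, hopDist (addShortcuts w H) h z x ≤ S * gdist w z y) (v : V) :
    ∀ (t : ℕ) (z : V), gdist w z v ≠ ⊤ → gdist w z v ≤ (t + 1) * L →
      hopDist (addShortcuts w H) ((t + 1) * h + t) z v ≤ S * gdist w z v ∨
      ∃ p q x x' : V, ∃ j m : ℕ, ∃ α γ : ℝ≥0∞, x ∈ A ∧ x' ∈ A ∧ j + m ≤ t ∧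
        hopDist (addShortcuts w H) (j * (h + 1)) z p ≤ S * α ∧
        hopDist (addShortcuts w H) (m * (h + 1)) q v ≤ S * γ ∧
        gdist w z p ≤ α ∧ α + gdist w p q + γ ≤ gdist w z v ∧
        hopDist (addShortcuts w H) h p x ≤ S * L ∧
        hopDist (addShortcuts w H) h q x' ≤ S * L := by
  -- both ends of a failing segment have a witness
  have hF2 : ∀ z y, gdist w z y ≠ ⊤ → gdist w z y ≤ L →
      hopDist (addShortcuts w H) h z y ≤ S * gdist w z y ∨
      ((∃ x ∈ A, hopDist (addShortcuts w H) h z x ≤ S * L) ∧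
        ∃ x ∈ A, hopDist (addShortcuts w H) h y x ≤ S * L) := by
    intro z y hzy hL
    rcases hF z y hzy with h1 | ⟨x, hxA, hx⟩
    · exact Or.inl h1
    rcases hF y z (by rwa [gdist_symm w hw]) with h1 | ⟨x', hxA', hx'⟩
    · left
      rwa [hop_symm _ (short_symm w hw H), gdist_symm w hw]
    · right
      refine ⟨⟨x, hxA, hx.trans (by gcongr)⟩, ⟨x', hxA', hx'.trans ?_⟩⟩
      rw [gdist_symm w hw]
      gcongr
  -- the last segment
  have hlast : ∀ (t : ℕ) (z : V), gdist w z v ≠ ⊤ → gdist w z v ≤ L →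
      hopDist (addShortcuts w H) ((t + 1) * h + t) z v ≤ S * gdist w z v ∨
      ∃ p q x x' : V, ∃ j m : ℕ, ∃ α γ : ℝ≥0∞, x ∈ A ∧ x' ∈ A ∧ j + m ≤ t ∧
        hopDist (addShortcuts w H) (j * (h + 1)) z p ≤ S * α ∧
        hopDist (addShortcuts w H) (m * (h + 1)) q v ≤ S * γ ∧
        gdist w z p ≤ α ∧ α + gdist w p q + γ ≤ gdist w z v ∧
        hopDist (addShortcuts w H) h p x ≤ S * L ∧
        hopDist (addShortcuts w H) h q x' ≤ S * L := by
    intro t z hfin hL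
    rcases hF2 z v hfin hL with h1 | ⟨⟨x, hxA, hx⟩, ⟨x', hxA', hx'⟩⟩
    · left
      exact (hop_mono _ z v (by nlinarith [Nat.zero_le (t * h)])).trans h1
    · right
      refine ⟨z, v, x, x', 0, 0, 0, 0, hxA, hxA', by omega, ?_, ?_, ?_, ?_, hx, hx'⟩
      · simp [hop_zero_self]
      · simp [hop_zero_self]
      · simp [gdist_self]
      · simp
  intro t
  induction t with
  | zero =>
    intro z hfin hL
    exact hlast 0 z hfin (by simpa using hL)
  | succ t ih =>
    intro z hfin hL
    obtain ⟨y, hyL, hy, hcase⟩ := first_segment w hpos z v L hfin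
    rcases hcase with hyv | ⟨z', h5, hzL, h6⟩
    · subst hyv
      exact hlast (t + 1) z hfin hyL
    have hyfin : gdist w z y ≠ ⊤ := fun e => by simp [e] at h5; exact hfin h5.symm
    have hzfin' : gdist w z z' ≠ ⊤ := fun e => by simp [e] at h6; exact hfin h6.symm
    have hzfin : gdist w z' v ≠ ⊤ := fun e => by simp [e] at h5; exact hfin h5.symm
    have hLfin : L ≠ ⊤ := ne_top_of_lt hzL
    have hzL' : gdist w z' v ≤ (t + 1) * L := by
      have e1 : L + gdist w z' v ≤ L + (t + 1) * L := by
        calc L + gdist w z' v ≤ gdist w z z' + gdist w z' v := by gcongr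
          _ = gdist w z v := h6
          _ ≤ _ := hL
          _ = L + (t + 1) * L := by push_cast; ring
      exact (ENNReal.add_le_add_iff_left hLfin).1 e1
    have hw1 : ∀ a b : V, hopDist (addShortcuts w H) 1 a b ≤ S * w a b := fun a b =>
      (hop_one _ a b).trans ((short_le_w w H a b).trans (le_mul_of_one_le_left bot_le hS))
    rcases hF2 z y hyfin hyL with h1 | ⟨⟨x, hxA, hx⟩, ⟨x', hxA', hx'⟩⟩
    · skip
      have hz' : hopDist (addShortcuts w H) (h + 1) z z' ≤ S * (gdist w z y + w y z') := by
        rw [mul_add]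
        exact (hop_add _ 1 y z' h z).trans (add_le_add h1 (hw1 y z'))
      rcases ih z' hzfin hzL' with h2 | ⟨p, q, x, x', j, m, α, γ, hxA, hxA', hjm, a1, a2, a3, a4, a5, a6⟩
      · left
        have e : (t + 1 + 1) * h + (t + 1) = (h + 1) + ((t + 1) * h + t) := by ring
        have e2 : S * gdist w z v = S * (gdist w z y + w y z') + S * gdist w z' v := by
          rw [← h5]; ring
        rw [e, e2]
        exact (hop_add _ _ z' v _ z).trans (add_le_add hz' h2)
      · right
        refine ⟨p, q, x, x', j + 1, m, gdist w z y + w y z' + α, γ, hxA, hxA', by omega, ?_, a2,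
          ?_, ?_, a5, a6⟩
        · have e : (j + 1) * (h + 1) = (h + 1) + j * (h + 1) := by ring
          rw [e, mul_add S]
          exact (hop_add _ _ z' p _ z).trans (add_le_add hz' a1)
        · refine (gdist_tri w z z' p).trans (add_le_add ?_ a3)
          exact (gdist_tri w z y z').trans (by gcongr; exact gdist_le_w w y z')
        · rw [← h5]
          calc gdist w z y + w y z' + α + gdist w p q + γ
              = gdist w z y + (w y z' + (α + gdist w p q + γ)) := by ring
            _ ≤ _ := by gcongr
    · right
      rcases ih z' hzfin hzL' with h2 | ⟨p, q, x2, x2', j, m, α, γ, hx2A, hx2A', hjm, a1, a2, a3, a4, a5, a6⟩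
      · refine ⟨z, y, x, x', 0, t + 1, 0, w y z' + gdist w z' v, hxA, hxA', by omega, ?_, ?_, ?_, ?_,
          hx, hx'⟩
        · simp [hop_zero_self]
        · have e : (t + 1) * (h + 1) = 1 + ((t + 1) * h + t) := by ring
          rw [e, mul_add]
          exact (hop_add _ _ z' v _ y).trans (add_le_add (hw1 y z') h2)
        · simp [gdist_self]
        · rw [zero_add]; exact h5.le
      · refine ⟨z, q, x, x2', 0, m, 0, γ, hxA, hx2A', by omega, ?_, a2, ?_, ?_, hx, a6⟩
        · simp [hop_zero_self]
        · simp [gdist_self]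
        · rw [zero_add, ← h6]
          calc gdist w z q + γ ≤ (gdist w z z' + (gdist w z' p + gdist w p q)) + γ := by
                gcongr
                exact (gdist_tri w z z' q).trans (by gcongr; exact gdist_tri w z' p q)
            _ ≤ (gdist w z z' + (α + gdist w p q)) + γ := by gcongr
            _ = gdist w z z' + (α + gdist w p q + γ) := by ring
            _ ≤ _ := by gcongr

/-- One level of the hierarchy is well connected by `H`. -/
def LevelOK (w : V → V → ℝ≥0∞) (H : Set (V × V)) (A B : Finset V) : Prop :=
  ∀ x ∈ A, (∀ y ∈ A, (∀ s ∈ B, gdist w x y < gdist w x s) → (x, y) ∈ H) ∧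
    (B.Nonempty → ∃ p ∈ B, (x, p) ∈ H ∧ ∀ s ∈ B, gdist w x p ≤ gdist w x s)

lemma level_use (w : V → V → ℝ≥0∞) (H : Set (V × V)) (A B : Finset V)
    (hl : LevelOK w H A B) (x y : V) (hx : x ∈ A) (hy : y ∈ A) :
    hopDist (addShortcuts w H) 1 x y ≤ gdist w x y ∨
    ∃ p ∈ B, hopDist (addShortcuts w H) 1 x p ≤ gdist w x y := by
  by_cases hc : ∀ s ∈ B, gdist w x y < gdist w x s
  · left
    exact (hop_one _ x y).trans (short_le_gdist w H x y ((hl x hx).1 y hy hc))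
  · right
    push Not at hc
    obtain ⟨s, hs, hle⟩ := hc
    obtain ⟨p, hp, hpH, hmin⟩ := (hl x hx).2 ⟨s, hs⟩
    exact ⟨p, hp, (hop_one _ x p).trans
      ((short_le_gdist w H x p hpH).trans ((hmin s hs).trans hle))⟩

lemma main_induction [Fintype V] (w : V → V → ℝ≥0∞) (hw : ∀ u v, w u v = w v u)
    (hpos : ∀ u v, 0 < w u v) (H : Set (V × V)) (A : ℕ → Finset V) (r k : ℕ)
    (hA0 : A 0 = Finset.univ) (hl : ∀ i ≤ k, LevelOK w H (A i) (A (i + 1)))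
    (hr : k = 0 ∨ 1 ≤ r) : ∀ i ≤ k, ∀ u v, gdist w u v ≠ ⊤ →
      hopDist (addShortcuts w H) (2 * (r + 1) ^ i - 1) u v
        ≤ (1 + 4 / (r : ℝ≥0∞)) ^ i * gdist w u v ∨
      ∃ x ∈ A (i + 1), hopDist (addShortcuts w H) (2 * (r + 1) ^ i - 1) u x
        ≤ (1 + 4 / (r : ℝ≥0∞)) ^ i * gdist w u v := by
  intro i
  induction i with
  | zero =>
    intro hi u v _
    have := level_use w H _ _ (hl 0 hi) u v (by simp [hA0]) (by simp [hA0])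
    simpa using this
  | succ i ih =>
    intro hi u v hfin
    have hr1 : 1 ≤ r := by rcases hr with h | h <;> omega
    have hr0 : (r : ℝ≥0∞) ≠ 0 := by exact_mod_cast (by omega : r ≠ 0)
    have hrt : (r : ℝ≥0∞) ≠ ⊤ := ENNReal.natCast_ne_top r
    obtain ⟨t, rfl⟩ : ∃ t, r = t + 1 := ⟨r - 1, by omega⟩
    have hF := ih (by omega)
    set S : ℝ≥0∞ := (1 + 4 / ((t + 1 : ℕ) : ℝ≥0∞)) ^ i with hSdef
    have hS1 : 1 ≤ S := one_le_pow₀ (by simp)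
    obtain ⟨h, hh⟩ : ∃ h, 2 * (t + 1 + 1) ^ i = h + 1 :=
      ⟨2 * (t + 1 + 1) ^ i - 1, by have : 0 < (t + 1 + 1) ^ i := by positivity
                                   omega⟩
    have hh1 : 2 * (t + 1 + 1) ^ i - 1 = h := by omega
    have hh2 : 2 * (t + 1 + 1) ^ (i + 1) - 1 = (t + 1 + 1) * h + (t + 1) := by
      have : 2 * (t + 1 + 1) ^ (i + 1) = (t + 1 + 1) * h + (t + 1) + 1 := by
        rw [pow_succ, ← mul_assoc, hh]; ring
      omega
    rw [hh1] at hF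
    rw [hh2]
    set L : ℝ≥0∞ := gdist w u v / ((t + 1 : ℕ) : ℝ≥0∞) with hL
    have hrL : ((t + 1 : ℕ) : ℝ≥0∞) * L = gdist w u v := ENNReal.mul_div_cancel hr0 hrt
    have hbound : (1 + 4 / ((t + 1 : ℕ) : ℝ≥0∞)) ^ (i + 1) * gdist w u v
        = S * gdist w u v + 4 * (S * L) := by
      rw [pow_succ, ← hSdef, hL]
      simp only [div_eq_mul_inv]
      ring
    rw [hbound]
    rcases segments w hw hpos H (A (i + 1)) h S L hS1 hF v t u hfin
      (by rw [← hrL]; push_cast; exact le_rfl) with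
      h1 | ⟨p, q, x, x', j, m, α, γ, hxA, hxA', hjm, a1, a2, a3, a4, a5, a6⟩
    · left
      refine (hop_mono _ u v ?_).trans (h1.trans le_self_add)
      nlinarith
    · have hxx : gdist w x x' ≤ S * L + gdist w p q + S * L := by
        calc gdist w x x' ≤ gdist w x p + gdist w p x' := gdist_tri w x p x'
          _ ≤ gdist w x p + (gdist w p q + gdist w q x') := by gcongr; exact gdist_tri w p q x'
          _ ≤ S * L + (gdist w p q + S * L) := by
              gcongr
              · rw [gdist_symm w hw]; exact (gdist_le_hop_short w H x h p).trans a5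
              · exact (gdist_le_hop_short w H x' h q).trans a6
          _ = _ := by ring
      have hpq : gdist w p q ≤ S * gdist w p q := le_mul_of_one_le_left bot_le hS1
      have hux : hopDist (addShortcuts w H) (j * (h + 1) + h) u x ≤ S * α + S * L :=
        (hop_add _ _ p x _ u).trans (add_le_add a1 a5)
      have hjm' : j * (h + 1) + m * (h + 1) ≤ t * (h + 1) := by
        rw [← add_mul]; exact Nat.mul_le_mul_right _ hjm
      rcases level_use w H _ _ (hl (i + 1) hi) x x' hxA hxA' with h1 | ⟨b, hb, h1⟩
      · left
        have c1 : hopDist (addShortcuts w H) (h + m * (h + 1)) x' v ≤ S * L + S * γ :=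
          (hop_add _ _ q v _ x').trans
            (add_le_add (by rw [hop_symm _ (short_symm w hw H)]; exact a6) a2)
        have c2 := (hop_add (addShortcuts w H) (h + m * (h + 1)) x' v 1 x).trans
          (add_le_add (h1.trans hxx) c1)
        have c3 := (hop_add (addShortcuts w H) (1 + (h + m * (h + 1))) x v _ u).trans
          (add_le_add hux c2)
        refine (hop_mono _ u v ?_).trans (c3.trans ?_)
        · nlinarith
        · calc S * α + S * L + (S * L + gdist w p q + S * L + (S * L + S * γ))
              ≤ S * α + S * L + (S * L + S * gdist w p q + S * L + (S * L + S * γ)) := by gcongr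
            _ = S * (α + gdist w p q + γ) + 4 * (S * L) := by ring
            _ ≤ _ := by gcongr
      · right
        refine ⟨b, hb, ?_⟩
        have c3 := (hop_add (addShortcuts w H) 1 x b _ u).trans (add_le_add hux (h1.trans hxx))
        refine (hop_mono _ u b ?_).trans (c3.trans ?_)
        · nlinarith
        · calc S * α + S * L + (S * L + gdist w p q + S * L)
              ≤ S * α + S * L + (S * L + S * gdist w p q + S * L) := by gcongr
            _ ≤ S * α + S * L + (S * L + S * gdist w p q + S * L) + (S * γ + S * L) := le_self_add
            _ = S * (α + gdist w p q + γ) + 4 * (S * L) := by ring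
            _ ≤ _ := by gcongr

/-! ### Choosing the next level -/

/-- Pairs of `A` that are closer than the set `S`. -/
noncomputable def bunch (d : V → V → ℝ≥0∞) (A S : Finset V) : Finset (V × V) :=
  (A ×ˢ A).filter (fun p => ∀ s ∈ S, d p.1 p.2 < d p.1 s)

noncomputable def ball (d : V → V → ℝ≥0∞) (A S : Finset V) (x : V) : Finset V :=
  A.filter (fun y => ∀ s ∈ S, d x y < d x s)

lemma bunch_card (d : V → V → ℝ≥0∞) (A S : Finset V) :
    (bunch d A S).card = ∑ x ∈ A, (ball d A S x).card := by
  unfold bunch ball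
  simp only [Finset.card_filter]
  rw [Finset.sum_product]

lemma rank_sum (f : V → ℝ≥0∞) (A B : Finset V) (hB : B ⊆ A) :
    2 * ∑ s ∈ A, ((B.filter (fun y => f y < f s)).card : ℝ) + (B.card : ℝ) ^ 2
      ≤ 2 * A.card * B.card := by
  have h1 : ∀ s, ((B.filter (fun y => f y < f s)).card : ℝ)
      = B.card - ((B.filter (fun y => f s ≤ f y)).card : ℝ) := by
    intro s
    have := Finset.card_filter_add_card_filter_not (s := B) (fun y => f y < f s)
    simp only [not_lt] at this
    rw [eq_sub_iff_add_eq]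
    exact_mod_cast this
  simp only [h1, Finset.sum_sub_distrib, Finset.sum_const, nsmul_eq_mul]
  have h2 : ∑ s ∈ B, ((B.filter (fun y => f s ≤ f y)).card : ℝ)
      ≤ ∑ s ∈ A, ((B.filter (fun y => f s ≤ f y)).card : ℝ) :=
    Finset.sum_le_sum_of_subset_of_nonneg hB (fun _ _ _ => by positivity)
  have h3 : (B.card : ℝ) ^ 2 ≤ 2 * ∑ s ∈ B, ((B.filter (fun y => f s ≤ f y)).card : ℝ) := by
    have e : ∀ s, ((B.filter (fun y => f s ≤ f y)).card : ℝ)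
        = ∑ y ∈ B, if f s ≤ f y then (1 : ℝ) else 0 := by
      intro s; rw [Finset.card_filter]; push_cast; rfl
    simp only [e]
    rw [two_mul]
    nth_rewrite 2 [Finset.sum_comm]
    rw [← Finset.sum_add_distrib]
    simp only [← Finset.sum_add_distrib]
    have : (B.card : ℝ) ^ 2 = ∑ s ∈ B, ∑ y ∈ B, (1 : ℝ) := by simp [sq]
    rw [this]
    refine Finset.sum_le_sum fun s _ => Finset.sum_le_sum fun y _ => ?_
    rcases le_total (f s) (f y) with h | h
    · rw [if_pos h]; split_ifs <;> norm_num
    · rw [if_pos h]; split_ifs <;> norm_num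
  linarith

lemma hitting_step (d : V → V → ℝ≥0∞) (A S : Finset V) (hA : A.Nonempty) :
    ∃ s ∈ A, 2 * (A.card : ℝ) ^ 2 * (bunch d A (insert s S)).card + ((bunch d A S).card : ℝ) ^ 2
      ≤ 2 * (A.card : ℝ) ^ 2 * (bunch d A S).card := by
  by_contra hcon
  push Not at hcon
  have hN : (0 : ℝ) < A.card := by exact_mod_cast hA.card_pos
  have hsum := Finset.sum_lt_sum_of_nonempty hA hcon
  rw [Finset.sum_const, nsmul_eq_mul, Finset.sum_add_distrib, Finset.sum_const, nsmul_eq_mul,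
    ← Finset.mul_sum] at hsum
  -- the averaging bound
  have key : 2 * ∑ s ∈ A, ((bunch d A (insert s S)).card : ℝ)
      + ∑ x ∈ A, ((ball d A S x).card : ℝ) ^ 2 ≤ 2 * A.card * (bunch d A S).card := by
    simp only [bunch_card]
    push_cast
    rw [Finset.sum_comm, Finset.mul_sum, Finset.mul_sum, ← Finset.sum_add_distrib]
    refine Finset.sum_le_sum fun x _ => ?_
    have := rank_sum (d x) A (ball d A S x) (Finset.filter_subset _ _)
    have e : ∀ s, ball d A (insert s S) x = (ball d A S x).filter (fun y => d x y < d x s) := by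
      intro s
      ext y
      simp only [ball, Finset.mem_filter, Finset.mem_insert, forall_eq_or_imp]
      tauto
    simp only [e]
    exact this
  have cs : ((bunch d A S).card : ℝ) ^ 2 ≤ A.card * ∑ x ∈ A, ((ball d A S x).card : ℝ) ^ 2 := by
    rw [bunch_card]; push_cast
    exact sq_sum_le_card_mul_sum_sq
  have k2 := mul_le_mul_of_nonneg_left key (sq_nonneg (A.card : ℝ))
  have k3 := mul_le_mul_of_nonneg_left cs hN.le
  nlinarith

lemma hitting (d : V → V → ℝ≥0∞) (A : Finset V) (m : ℕ) :
    ∃ S : Finset V, S.card ≤ m ∧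
      ((bunch d A S).card : ℝ) * (m + 2) ≤ 2 * (A.card : ℝ) ^ 2 := by
  rcases A.eq_empty_or_nonempty with rfl | hA
  · exact ⟨∅, by simp, by simp [bunch]⟩
  induction m with
  | zero =>
    refine ⟨∅, by simp, ?_⟩
    have : (bunch d A ∅).card = A.card * A.card := by simp [bunch]
    rw [this]; push_cast; nlinarith
  | succ m ih =>
    obtain ⟨S, hS, hb⟩ := ih
    obtain ⟨s, hs, hstep⟩ := hitting_step d A S hA
    refine ⟨insert s S, (Finset.card_insert_le s S).trans (by omega), ?_⟩
    have hN : (0 : ℝ) < A.card := by exact_mod_cast hA.card_pos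
    set M : ℝ := 2 * (A.card : ℝ) ^ 2 with hM
    have hMpos : 0 < M := by positivity
    set x : ℝ := ((bunch d A S).card : ℝ)
    set y : ℝ := ((bunch d A (insert s S)).card : ℝ)
    have hx : 0 ≤ x := by positivity
    have hm : (0 : ℝ) ≤ m := by positivity
    push_cast
    have h1 : M * (y * (m + 1 + 2)) ≤ M * M := by
      have a1 : (M * y + x ^ 2) * (m + 3) ≤ M * x * (m + 3) :=
        mul_le_mul_of_nonneg_right hstep (by linarith)
      have hxM : x ≤ M := by nlinarith [mul_nonneg hx hm]
      have a2 : 0 ≤ (M - x * (m + 2)) * (M - x) :=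
        mul_nonneg (by linarith) (by linarith)
      nlinarith [sq_nonneg x]
    exact le_of_mul_le_mul_left h1 hMpos

/-! ### Assembling the hopset -/

lemma exists_hierarchy [Fintype V] (d : V → V → ℝ≥0∞) (n k : ℕ) (hn : n = Fintype.card V)
    (hk : n ≤ 2 ^ 2 ^ k) :
    ∃ A : ℕ → Finset V, A 0 = Finset.univ ∧ A (k + 1) = ∅ ∧
      ∀ i ≤ k, ((A i).card : ℝ) ≤ n * (1 / 2) ^ i ∧
        ((bunch d (A i) (A (i + 1))).card : ℝ) ≤ 8 * n * (1 / 2) ^ i := by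
  choose nxt hn1 hn2 using hitting d
  let M : ℕ → ℕ := fun i => 2 * n / 2 ^ (2 ^ i + i)
  let B : ℕ → Finset V := fun i => Nat.rec Finset.univ (fun i A => nxt A (M (i + 1))) i
  have hB0 : B 0 = Finset.univ := rfl
  have hBs : ∀ i, B (i + 1) = nxt (B i) (M (i + 1)) := fun i => rfl
  have hcard : ∀ i, ((B i).card : ℝ) * 2 ^ (2 ^ i + i) ≤ 2 * n := by
    intro i
    cases i with
    | zero => simp [hB0, hn, mul_comm]
    | succ i =>
      have h1 : (B (i + 1)).card ≤ M (i + 1) := by rw [hBs]; exact hn1 _ _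
      have h2 : M (i + 1) * 2 ^ (2 ^ (i + 1) + (i + 1)) ≤ 2 * n := Nat.div_mul_le_self _ _
      exact_mod_cast (Nat.mul_le_mul_right _ h1).trans h2
  have hcard2 : ∀ i, ((B i).card : ℝ) ≤ n * (1 / 2) ^ i := by
    intro i
    have h1 := hcard i
    have h2 : (2 : ℝ) ≤ 2 ^ 2 ^ i := by
      calc (2 : ℝ) = 2 ^ 1 := by norm_num
        _ ≤ _ := pow_le_pow_right₀ (by norm_num) Nat.one_le_two_pow
    have h3 : ((B i).card : ℝ) * 2 ^ i * 2 ≤ 2 * n := by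
      refine le_trans ?_ h1
      rw [pow_add]
      have : (0 : ℝ) ≤ (B i).card * 2 ^ i := by positivity
      nlinarith
    rw [one_div, inv_pow, ← div_eq_mul_inv, le_div_iff₀ (by positivity)]
    linarith
  refine ⟨fun i => if i ≤ k then B i else ∅, by simp [hB0], by simp, ?_⟩
  intro i hi
  simp only [if_pos hi]
  refine ⟨hcard2 i, ?_⟩
  by_cases hik : i + 1 ≤ k
  · simp only [if_pos hik, hBs]
    rcases Nat.eq_zero_or_pos n with h0 | hpos
    · have hBe : B i = ∅ := by
        have := hcard2 i
        rw [h0] at this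
        simp at this
        exact this
      simp [hBe, bunch, h0]
    have hnR : (0 : ℝ) < n := by exact_mod_cast hpos
    have h1 := hn2 (B i) (M (i + 1))
    have h2 : (2 * n : ℝ) ≤ ((M (i + 1) : ℝ) + 2) * 2 ^ (2 ^ (i + 1) + (i + 1)) := by
      have : 2 * n < (M (i + 1) + 1) * 2 ^ (2 ^ (i + 1) + (i + 1)) := by
        have := Nat.lt_div_mul_add (a := 2 * n) (b := 2 ^ (2 ^ (i + 1) + (i + 1))) (by positivity)
        simp only [M]; rw [add_mul, one_mul]; exact this
      have h3 : (2 * n : ℝ) < ((M (i + 1) : ℝ) + 1) * 2 ^ (2 ^ (i + 1) + (i + 1)) := by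
        exact_mod_cast this
      have : (0 : ℝ) < 2 ^ (2 ^ (i + 1) + (i + 1)) := by positivity
      linarith
    set Φ : ℝ := ((bunch d (B i) (nxt (B i) (M (i + 1)))).card : ℝ)
    have hΦ : 0 ≤ Φ := by positivity
    set b : ℝ := ((B i).card : ℝ)
    have hb : 0 ≤ b := by positivity
    have h4 := hcard i
    -- P = 2 ^ 2 ^ i, Q = 2 ^ i
    have e1 : (2 : ℝ) ^ (2 ^ (i + 1) + (i + 1)) = 2 * (2 ^ 2 ^ i) ^ 2 * 2 ^ i := by
      rw [← pow_mul, pow_add, pow_succ 2 i, pow_succ (2 : ℝ) i]; ring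
    rw [e1] at h2
    rw [pow_add] at h4
    set P : ℝ := 2 ^ 2 ^ i
    have hP : 0 < P := by positivity
    rw [one_div, inv_pow, ← div_eq_mul_inv, le_div_iff₀ (by positivity)]
    set Q : ℝ := 2 ^ i
    have hQ : 0 < Q := by positivity
    have g1 : Φ * (2 * n) ≤ 2 * b ^ 2 * (2 * P ^ 2 * Q) := by
      calc Φ * (2 * n) ≤ Φ * (((M (i + 1) : ℝ) + 2) * (2 * P ^ 2 * Q)) := by gcongr
        _ = Φ * ((M (i + 1) : ℝ) + 2) * (2 * P ^ 2 * Q) := by ring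
        _ ≤ _ := by gcongr
    have g2 : (b * (P * Q)) ^ 2 ≤ (2 * n) ^ 2 := by gcongr
    have g3 : (2 * n) * (Φ * Q) ≤ (2 * n) * (8 * n) := by
      have := mul_le_mul_of_nonneg_right g1 hQ.le
      nlinarith
    exact le_of_mul_le_mul_left g3 (by positivity)
  · have hik' : i = k := by omega
    simp only [if_neg hik]
    have h1 : ((bunch d (B i) ∅).card : ℝ) = (B i).card * (B i).card := by
      simp [bunch]
    rw [h1]
    have h2 : ((B i).card : ℝ) ≤ 2 := by
      have h3 := hcard i
      rw [pow_add] at h3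
      have h4 : (n : ℝ) ≤ 2 ^ 2 ^ i := by rw [hik']; exact_mod_cast hk
      have h5 : (1 : ℝ) ≤ 2 ^ i := one_le_pow₀ (by norm_num)
      have h6 : (0 : ℝ) < 2 ^ 2 ^ i := by positivity
      have h7 : ((B i).card : ℝ) * 2 ^ 2 ^ i ≤ 2 * 2 ^ 2 ^ i := by
        have : ((B i).card : ℝ) * 2 ^ 2 ^ i ≤ (B i).card * (2 ^ 2 ^ i * 2 ^ i) := by
          gcongr
          nlinarith
        linarith
      exact le_of_mul_le_mul_right h7 h6
    have h3 := hcard2 i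
    have h4 : (0 : ℝ) ≤ n * (1 / 2) ^ i := by positivity
    have h5 : (0 : ℝ) ≤ (B i).card := by positivity
    nlinarith

lemma exists_edges [Fintype V] (w : V → V → ℝ≥0∞) (n k : ℕ) (hn : n = Fintype.card V)
    (hk : n ≤ 2 ^ 2 ^ k) :
    ∃ (A : ℕ → Finset V) (H : Finset (V × V)), A 0 = Finset.univ ∧ A (k + 1) = ∅ ∧
      (H.card : ℝ) ≤ 18 * n ∧ ∀ i ≤ k, LevelOK w (↑H : Set (V × V)) (A i) (A (i + 1)) := by
  obtain ⟨A, hA0, hAk, hA⟩ := exists_hierarchy (gdist w) n k hn hk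
  have hp : ∀ (B : Finset V) (x : V), ∃ p, B.Nonempty →
      p ∈ B ∧ ∀ s ∈ B, gdist w x p ≤ gdist w x s := by
    intro B x
    by_cases h : B.Nonempty
    · obtain ⟨p, hp, hm⟩ := B.exists_min_image (fun s => gdist w x s) h
      exact ⟨p, fun _ => ⟨hp, hm⟩⟩
    · exact ⟨x, fun h' => absurd h' h⟩
  choose piv hpiv using hp
  let E : ℕ → Finset (V × V) := fun i =>
    bunch (gdist w) (A i) (A (i + 1)) ∪ (A i).image (fun x => (x, piv (A (i + 1)) x))
  refine ⟨A, (Finset.range (k + 1)).biUnion E, hA0, hAk, ?_, ?_⟩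
  · have h1 : (((Finset.range (k + 1)).biUnion E).card : ℝ)
        ≤ ∑ i ∈ Finset.range (k + 1), ((E i).card : ℝ) := by
      exact_mod_cast Finset.card_biUnion_le
    refine h1.trans ?_
    have h2 : ∀ i ∈ Finset.range (k + 1), ((E i).card : ℝ) ≤ 9 * n * (1 / 2) ^ i := by
      intro i hi
      have hi' : i ≤ k := by simpa [Nat.lt_succ_iff] using hi
      have h3 : (E i).card ≤ (bunch (gdist w) (A i) (A (i + 1))).card + (A i).card :=
        (Finset.card_union_le _ _).trans (Nat.add_le_add_left Finset.card_image_le _)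
      have h4 : ((E i).card : ℝ) ≤ (bunch (gdist w) (A i) (A (i + 1))).card + (A i).card := by
        exact_mod_cast h3
      have := hA i hi'
      linarith [this.1, this.2]
    refine (Finset.sum_le_sum h2).trans ?_
    rw [← Finset.mul_sum]
    have h5 := sum_geometric_two_le (k + 1)
    have h6 : (0 : ℝ) ≤ 9 * n := by positivity
    nlinarith
  · intro i hi x hx
    have hsub : ∀ e ∈ E i, e ∈ ((↑((Finset.range (k + 1)).biUnion E) : Set (V × V))) := by
      intro e he
      simp only [Finset.coe_biUnion, Set.mem_iUnion, Finset.mem_coe]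
      exact ⟨i, Finset.mem_range.2 (by omega), he⟩
    refine ⟨fun y hy hc => hsub _ ?_, fun hB => ⟨piv (A (i + 1)) x, (hpiv _ x hB).1, hsub _ ?_,
      (hpiv _ x hB).2⟩⟩
    · refine Finset.mem_union_left _ ?_
      simp only [bunch, Finset.mem_filter, Finset.mem_product]
      exact ⟨⟨hx, hy⟩, hc⟩
    · exact Finset.mem_union_right _ (Finset.mem_image_of_mem _ hx)

lemma card_le_tower (n : ℕ) : n ≤ 2 ^ 2 ^ ⌈Real.logb 2 (Real.logb 2 (n : ℝ))⌉₊ := by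
  rcases Nat.lt_or_ge n 2 with h | h
  · exact (by omega : n ≤ 1).trans Nat.one_le_two_pow
  set k := ⌈Real.logb 2 (Real.logb 2 (n : ℝ))⌉₊
  have hn : (2 : ℝ) ≤ n := by exact_mod_cast h
  have h1 : Real.logb 2 (Real.logb 2 (n : ℝ)) ≤ k := Nat.le_ceil _
  have h2 : 0 < Real.logb 2 (n : ℝ) := Real.logb_pos (by norm_num) (by linarith)
  have h3 : Real.logb 2 (n : ℝ) ≤ 2 ^ (k : ℝ) := (Real.logb_le_iff_le_rpow (by norm_num) h2).1 h1
  rw [Real.rpow_natCast] at h3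
  have h4 : (n : ℝ) ≤ 2 ^ ((2 : ℝ) ^ k) :=
    (Real.logb_le_iff_le_rpow (by norm_num) (by linarith)).1 h3
  have h5 : ((2 : ℝ) ^ k) = ((2 ^ k : ℕ) : ℝ) := by push_cast; rfl
  rw [h5, Real.rpow_natCast] at h4
  exact_mod_cast h4

lemma stretch_le (k r : ℕ) (ε : ℝ) (hε : 0 < ε) (hr : (4 * (k : ℝ)) / Real.log (1 + ε) ≤ r)
    (hkr : k = 0 ∨ 1 ≤ r) :
    (1 + 4 / (r : ℝ≥0∞)) ^ k ≤ ENNReal.ofReal (1 + ε) := by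
  rcases hkr with rfl | hr1
  · simp only [pow_zero]
    rw [ENNReal.one_le_ofReal]; linarith
  have hrR : (0 : ℝ) < r := by exact_mod_cast hr1
  have e : (1 + 4 / (r : ℝ≥0∞)) = ENNReal.ofReal (1 + 4 / r) := by
    rw [ENNReal.ofReal_add (by norm_num) (by positivity), ENNReal.ofReal_div_of_pos hrR]
    simp
  rw [e, ← ENNReal.ofReal_pow (by positivity)]
  apply ENNReal.ofReal_le_ofReal
  have hlog : 0 < Real.log (1 + ε) := Real.log_pos (by linarith)
  calc (1 + 4 / (r : ℝ)) ^ k ≤ (Real.exp (4 / r)) ^ k := by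
        gcongr
        rw [add_comm]; exact Real.add_one_le_exp _
    _ = Real.exp (k * (4 / r)) := by rw [← Real.exp_nat_mul]
    _ ≤ Real.exp (Real.log (1 + ε)) := by
        apply Real.exp_le_exp.2
        rw [div_le_iff₀ hlog] at hr
        rw [← mul_div_assoc, div_le_iff₀ hrR]
        linarith
    _ = 1 + ε := Real.exp_log (by linarith)

end HopAux

/-- There is an absolute constant `C` such that every weighted
undirected graph with positive edge weights on `n` vertices admits, for every `ε > 0`,
a `(β, ε)`-hopset of size at most `C · n`, where `β = 2(r+1)^k` with
`k = ⌈log₂ log₂ n⌉` and `r = ⌈4k / ln(1+ε)⌉`. -/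
theorem linear_size_hopset_exists :
    ∃ C : ℝ, 0 < C ∧
      ∀ (V : Type) [Fintype V] (w : V → V → ℝ≥0∞),
        (∀ u v : V, w u v = w v u) → (∀ u v : V, 0 < w u v) →
        ∀ ε : ℝ, 0 < ε →
          ∃ H : Finset (V × V),
            (H.card : ℝ) ≤ C * (Fintype.card V : ℝ) ∧
            IsHopset w (↑H : Set (V × V))
              (2 * (⌈(4 * ((⌈Real.logb 2 (Real.logb 2 (Fintype.card V))⌉₊ : ℕ) : ℝ)) /
                      Real.log (1 + ε)⌉₊ + 1) ^
                  (⌈Real.logb 2 (Real.logb 2 (Fintype.card V))⌉₊ : ℕ)) ε := by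
  refine ⟨18, by norm_num, ?_⟩
  intro V _ w hw hpos ε hε
  set k := ⌈Real.logb 2 (Real.logb 2 (Fintype.card V))⌉₊ with hk
  set r := ⌈(4 * (k : ℝ)) / Real.log (1 + ε)⌉₊ with hr
  obtain ⟨A, H, hA0, hAk, hcard, hl⟩ :=
    HopAux.exists_edges w (Fintype.card V) k rfl (HopAux.card_le_tower _)
  refine ⟨H, hcard, fun u v => ⟨HopAux.gdist_le_hop_short w _ v _ u, ?_⟩⟩
  have hlog : 0 < Real.log (1 + ε) := Real.log_pos (by linarith)
  have hkr : k = 0 ∨ 1 ≤ r := by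
    rcases Nat.eq_zero_or_pos k with h | h
    · exact Or.inl h
    · right
      have hkR : (0 : ℝ) < k := by exact_mod_cast h
      exact Nat.ceil_pos.2 (by positivity)
  have hs := HopAux.stretch_le k r ε hε (Nat.le_ceil _) hkr
  by_cases hfin : gdist w u v = ⊤
  · rw [hfin, ENNReal.mul_top (by simp; linarith)]
    exact le_top
  rcases HopAux.main_induction w hw hpos _ A r k hA0 hl hkr k le_rfl u v hfin with h | ⟨x, hx, -⟩
  · refine (HopAux.hop_mono _ u v (Nat.sub_le _ 1)).trans (h.trans ?_)
    gcongr
  · rw [hAk] at hx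
    simp at hx
end
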